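/- Let ϑ₁, ϑ₂, ϑ₃ be Beurling weights on ℝ^d and 1 ≤ p, q₁, q₂, r₁, r₂ < ∞. If ϑ₃ ≺ ϑ₁, q₂ ≤ q₁ and r₁ ≤ r₂, then A^{p,1,q₁,r₁}_{ϑ₁,ϑ₂}(ℝ^d) is continuously embedded in A^{p,1,q₂,r₂}_{ϑ₃,ϑ₂}(ℝ^d): every f ∈ A^{p,1,q₁,r₁}_{ϑ₁,ϑ₂}(ℝ^d) belongs to A^{p,1,q₂,r₂}_{ϑ₃,ϑ₂}(ℝ^d) and there exists C > 0 with ‖f‖_{A^{p,1,q₂,r₂}_{ϑ₃,ϑ₂}} ≤ C·‖f‖_{A^{p,1,q₁,r₁}_{ϑ₁,ϑ₂}} for all such f. -/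

import Mathlib

open MeasureTheory Filter Topology
open scoped ENNReal NNReal BigOperators

noncomputable section

/-- The unit cube `α + [0,1)^d` at the integer point `α ∈ ℤ^d`. -/
def cube {d : ℕ} (α : Fin d → ℤ) : Set (Fin d → ℝ) :=
  Set.univ.pi fun i => Set.Ico (α i : ℝ) ((α i : ℝ) + 1)

/-- The weighted amalgam norm `‖f‖_{pq,ω}` of the space `(L^p_ω, ℓ^q)`. -/
def amalgamNorm {d : ℕ} (p q : ℝ) (ω : (Fin d → ℝ) → ℝ) (f : (Fin d → ℝ) → ℂ) : ℝ≥0∞ :=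
  (∑' α : Fin d → ℤ,
      (eLpNorm (fun x => ω x • f x) (ENNReal.ofReal p) (volume.restrict (cube α))) ^ q) ^ (1 / q)

/-- Membership in the weighted amalgam space `(L^p_ω, ℓ^q)`. -/
def MemAmalgam {d : ℕ} (p q : ℝ) (ω : (Fin d → ℝ) → ℝ) (f : (Fin d → ℝ) → ℂ) : Prop :=
  Measurable f ∧ amalgamNorm p q ω f < ⊤

/-- A Beurling weight: measurable, `ϑ ≥ 1` and submultiplicative. -/
def IsBeurling {d : ℕ} (ϑ : (Fin d → ℝ) → ℝ) : Prop :=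
  Measurable ϑ ∧ (∀ x, 1 ≤ ϑ x) ∧ ∀ x y, ϑ (x + y) ≤ ϑ x * ϑ y

/-- The Fourier transform `f̂(ξ) = ∫ f(x) e^{-2πi⟨x,ξ⟩} dx`. -/
def fourierT {d : ℕ} (f : (Fin d → ℝ) → ℂ) (ξ : Fin d → ℝ) : ℂ :=
  ∫ x : Fin d → ℝ,
    Complex.exp (-(2 * (Real.pi : ℂ) * Complex.I * ∑ i, (x i : ℂ) * (ξ i : ℂ))) * f x

/-- The norm of `A^{p,1,q,r}_{ϑ₁,ϑ₂}(ℝ^d)`. -/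
def ANorm {d : ℕ} (p q r : ℝ) (ϑ₁ ϑ₂ : (Fin d → ℝ) → ℝ) (f : (Fin d → ℝ) → ℂ) : ℝ≥0∞ :=
  amalgamNorm p 1 ϑ₁ f + amalgamNorm q r ϑ₂ (fourierT f)

/-- Membership in `A^{p,1,q,r}_{ϑ₁,ϑ₂}(ℝ^d)`. -/
def MemA {d : ℕ} (p q r : ℝ) (ϑ₁ ϑ₂ : (Fin d → ℝ) → ℝ) (f : (Fin d → ℝ) → ℂ) : Prop :=
  MemAmalgam p 1 ϑ₁ f ∧ MemAmalgam q r ϑ₂ (fourierT f)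

/-- Convolution `(f∗g)(x) = ∫ f(x−t)g(t) dt`. -/
def convF {d : ℕ} (f g : (Fin d → ℝ) → ℂ) (x : Fin d → ℝ) : ℂ :=
  ∫ t : Fin d → ℝ, f (x - t) * g t

/-- `ϑ ≺ ϑ'` : domination of weights up to a constant. -/
def Prec {d : ℕ} (ϑ ϑ' : (Fin d → ℝ) → ℝ) : Prop :=
  ∃ C : ℝ, 0 < C ∧ ∀ x, ϑ x ≤ C * ϑ' x

/-- The Beurling–Domar condition `∑_{n≥1} log ϑ(nx)/n² < ∞`. -/
def BeurlingDomar {d : ℕ} (ϑ : (Fin d → ℝ) → ℝ) : Prop :=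
  ∀ x : Fin d → ℝ, Summable fun n : ℕ => Real.log (ϑ ((n : ℝ) • x)) / (n : ℝ) ^ 2

/-- `w` does not tend to zero as `|x| → ∞`. -/
def NotVanishingAtInfty {d : ℕ} (w : (Fin d → ℝ) → ℝ) : Prop :=
  ∃ δ : ℝ, 0 < δ ∧ ∀ R : ℝ, 0 < R → ∃ x : Fin d → ℝ, R < ‖x‖ ∧ δ ≤ w x

end

/-!
On both levels of the amalgam norm the exponent moves in the favourable direction: the unit cubes
have measure one, so the local `L^q` norms increase with `q`, while the `ℓ^r` norms decrease with
`r`. Hence the norm of the Fourier transform does not increase, and the constant is only needed to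
compare the weights `ϑ₃` and `ϑ₁` on the function side.
-/

section SequenceNorms

variable {ι : Type*}

lemma tsum_rpow_le_rpow_tsum (a : ι → ℝ≥0∞) {t : ℝ} (ht : 1 ≤ t) :
    ∑' i, a i ^ t ≤ (∑' i, a i) ^ t := by
  have rpow_split (x : ℝ≥0∞) : x ^ t = x * x ^ (t - 1) := by
    conv_lhs => rw [← add_sub_cancel 1 t,
      ENNReal.rpow_add_of_nonneg _ _ zero_le_one (sub_nonneg.2 ht), ENNReal.rpow_one]
  calc ∑' i, a i ^ t = ∑' i, a i * a i ^ (t - 1) := by simp_rw [← rpow_split]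
    _ ≤ ∑' i, a i * (∑' j, a j) ^ (t - 1) :=
        ENNReal.tsum_le_tsum fun i => mul_le_mul_right
          (ENNReal.rpow_le_rpow (ENNReal.le_tsum i) (sub_nonneg.2 ht)) _
    _ = (∑' i, a i) ^ t := by rw [ENNReal.tsum_mul_right, ← rpow_split]

lemma rpow_tsum_rpow_le_of_exponent_le (a : ι → ℝ≥0∞) {r s : ℝ} (hr : 0 < r) (hrs : r ≤ s) :
    (∑' i, a i ^ s) ^ (1 / s) ≤ (∑' i, a i ^ r) ^ (1 / r) := by
  have hs : 0 < s := hr.trans_le hrs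
  calc (∑' i, a i ^ s) ^ (1 / s) = (∑' i, (a i ^ r) ^ (s / r)) ^ (1 / s) := by
        simp_rw [← ENNReal.rpow_mul, mul_div_cancel₀ s hr.ne']
    _ ≤ ((∑' i, a i ^ r) ^ (s / r)) ^ (1 / s) :=
        ENNReal.rpow_le_rpow (tsum_rpow_le_rpow_tsum _ ((one_le_div hr).2 hrs))
          (one_div_nonneg.2 hs.le)
    _ = (∑' i, a i ^ r) ^ (1 / r) := by
        rw [← ENNReal.rpow_mul, mul_comm, div_mul_div_cancel₀ hs.ne']

end SequenceNorms

section Amalgam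

variable {d : ℕ} {p q r s : ℝ} {ω ω' : (Fin d → ℝ) → ℝ} {f : (Fin d → ℝ) → ℂ}

lemma volume_cube (α : Fin d → ℤ) : volume (cube α) = 1 := by
  simp [cube, Real.volume_pi_Ico]

instance isProbabilityMeasure_restrict_cube (α : Fin d → ℤ) :
    IsProbabilityMeasure (volume.restrict (cube α)) :=
  ⟨by rw [Measure.restrict_apply_univ, volume_cube]⟩

lemma amalgamNorm_le_of_global_exponent_le (hr : 0 < r) (hrs : r ≤ s) :
    amalgamNorm p s ω f ≤ amalgamNorm p r ω f :=
  rpow_tsum_rpow_le_of_exponent_le _ hr hrs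

lemma amalgamNorm_le_of_local_exponent_le (hr : 0 ≤ r) (hqp : q ≤ p)
    (hf : AEStronglyMeasurable fun x => ω x • f x) :
    amalgamNorm q r ω f ≤ amalgamNorm p r ω f :=
  ENNReal.rpow_le_rpow
    (ENNReal.tsum_le_tsum fun _ => ENNReal.rpow_le_rpow
      (eLpNorm_le_eLpNorm_of_exponent_le (ENNReal.ofReal_le_ofReal hqp) hf.restrict) hr)
    (one_div_nonneg.2 hr)

lemma amalgamNorm_le_mul_of_norm_weight_le {C : ℝ} (hr : 0 < r)
    (hω : ∀ x, ‖ω x‖ ≤ C * ‖ω' x‖) :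
    amalgamNorm p r ω f ≤ ENNReal.ofReal C * amalgamNorm p r ω' f := by
  have local_le (α : Fin d → ℤ) :
      eLpNorm (fun x => ω x • f x) (ENNReal.ofReal p) (volume.restrict (cube α)) ≤
        ENNReal.ofReal C *
          eLpNorm (fun x => ω' x • f x) (ENNReal.ofReal p) (volume.restrict (cube α)) := by
    refine eLpNorm_le_mul_eLpNorm_of_ae_le_mul (.of_forall fun x => ?_) _
    rw [norm_smul, norm_smul, ← mul_assoc]
    exact mul_le_mul_of_nonneg_right (hω x) (norm_nonneg _)
  calc amalgamNorm p r ω f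
      ≤ (∑' α, (ENNReal.ofReal C * eLpNorm (fun x => ω' x • f x) (ENNReal.ofReal p)
          (volume.restrict (cube α))) ^ r) ^ (1 / r) :=
        ENNReal.rpow_le_rpow
          (ENNReal.tsum_le_tsum fun α => ENNReal.rpow_le_rpow (local_le α) hr.le)
          (one_div_nonneg.2 hr.le)
    _ = ENNReal.ofReal C * amalgamNorm p r ω' f := by
        simp_rw [amalgamNorm, ENNReal.mul_rpow_of_nonneg _ _ hr.le, ENNReal.tsum_mul_left]
        rw [ENNReal.mul_rpow_of_nonneg _ _ (one_div_nonneg.2 hr.le), one_div,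
          ENNReal.rpow_rpow_inv hr.ne']

lemma Prec.exists_amalgamNorm_le_mul (h : Prec ω ω') (hω : ∀ x, 0 ≤ ω x) (hr : 0 < r) :
    ∃ C : ℝ, 0 < C ∧ ∀ f : (Fin d → ℝ) → ℂ,
      amalgamNorm p r ω f ≤ ENNReal.ofReal C * amalgamNorm p r ω' f := by
  obtain ⟨C, hC, hle⟩ := h
  refine ⟨C, hC, fun f => amalgamNorm_le_mul_of_norm_weight_le hr fun x => ?_⟩
  rw [Real.norm_of_nonneg (hω x)]
  exact (hle x).trans (mul_le_mul_of_nonneg_left (Real.le_norm_self _) hC.le)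

end Amalgam

theorem A_embedding_mixed_general {d : ℕ} {p q₁ q₂ r₁ r₂ : ℝ}
    (_hp : 1 ≤ p) (_hq₂ : 0 < q₂) (hr₁ : 0 < r₁) (hq : q₂ ≤ q₁) (hr : r₁ ≤ r₂)
    {ϑ₁ ϑ₂ ϑ₃ : (Fin d → ℝ) → ℝ}
    (_hϑ₁ : ∀ x, 1 ≤ ϑ₁ x) (hϑ₂ : Measurable ϑ₂) (hϑ₃ : ∀ x, 0 ≤ ϑ₃ x) (h31 : Prec ϑ₃ ϑ₁) :
    ∃ C : ℝ, 0 < C ∧ ∀ f : (Fin d → ℝ) → ℂ, MemA p q₁ r₁ ϑ₁ ϑ₂ f →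
      MemA p q₂ r₂ ϑ₃ ϑ₂ f ∧
      ANorm p q₂ r₂ ϑ₃ ϑ₂ f ≤ ENNReal.ofReal C * ANorm p q₁ r₁ ϑ₁ ϑ₂ f := by
  obtain ⟨C, hC, weight_le⟩ := h31.exists_amalgamNorm_le_mul (p := p) hϑ₃ one_pos
  refine ⟨max C 1, lt_max_of_lt_left hC, ?_⟩
  rintro f ⟨⟨hf, hf_lt⟩, hfhat, hfhat_lt⟩
  have fourier_le : amalgamNorm q₂ r₂ ϑ₂ (fourierT f) ≤ amalgamNorm q₁ r₁ ϑ₂ (fourierT f) :=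
    (amalgamNorm_le_of_global_exponent_le hr₁ hr).trans
      (amalgamNorm_le_of_local_exponent_le hr₁.le hq (hϑ₂.smul hfhat).aestronglyMeasurable)
  refine ⟨⟨⟨hf, (weight_le f).trans_lt (ENNReal.mul_lt_top ENNReal.ofReal_lt_top hf_lt)⟩,
    hfhat, fourier_le.trans_lt hfhat_lt⟩, ?_⟩
  calc ANorm p q₂ r₂ ϑ₃ ϑ₂ f
      ≤ ENNReal.ofReal C * amalgamNorm p 1 ϑ₁ f + 1 * amalgamNorm q₁ r₁ ϑ₂ (fourierT f) := by
        rw [one_mul]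
        exact add_le_add (weight_le f) fourier_le
    _ ≤ ENNReal.ofReal (max C 1) * amalgamNorm p 1 ϑ₁ f +
          ENNReal.ofReal (max C 1) * amalgamNorm q₁ r₁ ϑ₂ (fourierT f) := by
        gcongr
        · exact le_max_left C 1
        · exact ENNReal.one_le_ofReal.2 (le_max_right C 1)
    _ = ENNReal.ofReal (max C 1) * ANorm p q₁ r₁ ϑ₁ ϑ₂ f := (mul_add _ _ _).symm

/-- if `ϑ₃ ≺ ϑ₁`, `q₂ ≤ q₁` and `r₁ ≤ r₂` then
`A^{p,1,q₁,r₁}_{ϑ₁,ϑ₂}(ℝ^d) ↪ A^{p,1,q₂,r₂}_{ϑ₃,ϑ₂}(ℝ^d)` continuously. -/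
theorem A_embedding_mixed {d : ℕ} (p q₁ q₂ r₁ r₂ : ℝ)
    (hp : 1 ≤ p) (hq₁ : 1 ≤ q₁) (hq₂ : 1 ≤ q₂) (hr₁ : 1 ≤ r₁) (hr₂ : 1 ≤ r₂)
    (hq : q₂ ≤ q₁) (hr : r₁ ≤ r₂)
    (ϑ₁ ϑ₂ ϑ₃ : (Fin d → ℝ) → ℝ)
    (h1 : IsBeurling ϑ₁) (h2 : IsBeurling ϑ₂) (h3 : IsBeurling ϑ₃)
    (h31 : Prec ϑ₃ ϑ₁) :
    ∃ C : ℝ, 0 < C ∧ ∀ f : (Fin d → ℝ) → ℂ, MemA p q₁ r₁ ϑ₁ ϑ₂ f →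
      MemA p q₂ r₂ ϑ₃ ϑ₂ f ∧
      ANorm p q₂ r₂ ϑ₃ ϑ₂ f ≤ ENNReal.ofReal C * ANorm p q₁ r₁ ϑ₁ ϑ₂ f :=
  A_embedding_mixed_general hp (one_pos.trans_le hq₂) (one_pos.trans_le hr₁) hq hr h1.2.1 h2.1
    (fun x => zero_le_one.trans (h3.2.1 x)) h31
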